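/- For an m×n matrix M over a commutative ring with m = n + 2, writing M[j] for the maximal minor obtained by deleting rows j (a set of two rows), the three-term Plücker relation holds: M[{j₁,j₂}]·M[{j₃,j₄}] − M[{j₁,j₃}]·M[{j₂,j₄}] + M[{j₁,j₄}]·M[{j₂,j₃}] = 0 for any j₁ < j₂ < j₃ < j₄. -/

import Mathlib

open Matrix

/-- The strictly monotone map `Fin n → Fin (n+2)` skipping `j₁ < j₂`;
used to delete two rows from a matrix. -/
def skipTwo {n : ℕ} (j₁ j₂ : Fin (n + 2)) (h : j₁ < j₂) : Fin n → Fin (n + 2) :=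
  fun i => j₂.succAbove
    ((j₁.castLT (lt_of_lt_of_le (Fin.lt_iff_val_lt_val.mp h)
      (Nat.lt_succ_iff.mp j₂.isLt)) : Fin (n + 1)).succAbove i)

/-- The Grassmann–Plücker relation for determinants sharing all rows but two. -/
theorem det_vecCons_mul_det_vecCons {R : Type*} [CommRing R] {n : ℕ}
    (N : Matrix (Fin n) (Fin (n + 2)) R) (u v w x : Fin (n + 2) → R) :
    det (of (vecCons u (vecCons v N))) * det (of (vecCons w (vecCons x N))) =
      det (of (vecCons w (vecCons v N))) * det (of (vecCons u (vecCons x N))) +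
        det (of (vecCons u (vecCons w N))) * det (of (vecCons v (vecCons x N))) := by
  let L : (Fin (n + 2) → R) →ₗ[R] R :=
    (detRowAlternating (n := Fin (n + 2)) (R := R)).toMultilinearMap.toLinearMap
      (vecCons 0 (vecCons x N)) 0
  have hL (y) : L y = det (of (vecCons y (vecCons x N))) := by
    simp only [L, MultilinearMap.toLinearMap_apply]
    exact congrArg detRowAlternating
      (Fin.update_cons_zero (α := fun _ => Fin (n + 2) → R) 0 (vecCons x N) y)
  have hN (k : Fin n) : L (N k) = 0 := by
    rw [hL]
    exact det_zero_of_row_eq (i := 0) (j := k.succ.succ) (Fin.succ_ne_zero _).symm rfl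
  have hC := mulVec_cramer (of (vecCons u (vecCons v N)))ᵀ w
  rw [mulVec_transpose, vecMul_eq_sum, Fin.sum_univ_succ, Fin.sum_univ_succ,
    det_transpose] at hC
  have h0 : cramer (of (vecCons u (vecCons v N)))ᵀ w 0 =
      det (of (vecCons w (vecCons v N))) := by
    rw [cramer_transpose_apply]
    exact congrArg det
      (Fin.update_cons_zero (α := fun _ => Fin (n + 2) → R) u (vecCons v N) w)
  have h1 : cramer (of (vecCons u (vecCons v N)))ᵀ w (Fin.succ 0) =
      det (of (vecCons u (vecCons w N))) := by
    rw [cramer_transpose_apply]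
    exact congrArg det
      ((Fin.cons_update (α := fun _ => Fin (n + 2) → R) u (vecCons v N) 0 w).symm.trans
        (congrArg (vecCons u) (Fin.update_cons_zero (α := fun _ => Fin (n + 2) → R) v N w)))
  have h := congrArg L hC
  simp only [map_add, map_sum, map_smul, h0, h1, smul_eq_mul] at h
  change _ * L u + (_ * L v + ∑ k, _ * L (N k)) = _ at h
  simpa [hN, hL] using h.symm

theorem det_vecCons_swap {R : Type*} [CommRing R] {n : ℕ}
    (N : Matrix (Fin n) (Fin (n + 2)) R) (u v : Fin (n + 2) → R) :
    det (of (vecCons u (vecCons v N))) = -det (of (vecCons v (vecCons u N))) := by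
  refine Eq.trans (congrArg det ?_) (detRowAlternating.map_swap
    (of (vecCons v (vecCons u N))) (i := 0) (j := 1) (by simp))
  ext i j
  refine Fin.cases rfl (fun i => Fin.cases rfl (fun k => ?_) i) i
  have h : Equiv.swap (0 : Fin (n + 2)) 1 k.succ.succ = k.succ.succ :=
    Equiv.swap_apply_of_ne_of_ne (Fin.succ_ne_zero _)
      fun h => Fin.succ_ne_zero k (Fin.succ_injective _ h)
  exact (congrFun (congrArg (of (vecCons v (vecCons u N))) h) j).symm

theorem det_vecCons_single_single {R : Type*} [CommRing R] {n : ℕ}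
    (M : Matrix (Fin (n + 2)) (Fin n) R) (a b : Fin (n + 2)) (h : a < b) :
    det (of (vecCons (Pi.single b 1) (vecCons (Pi.single a 1) Mᵀ))) =
      (-1) ^ (b : ℕ) * (-1) ^ (a : ℕ) * (M.submatrix (skipTwo a b h) id).det := by
  have ha : b.succAbove (a.castLT (lt_of_lt_of_le h (Nat.lt_succ_iff.mp b.isLt))) = a :=
    by
    rw [Fin.succAbove_of_castSucc_lt _ _ h]
    rfl
  rw [det_succ_row_zero, Finset.sum_eq_single b, det_succ_row_zero,
    Finset.sum_eq_single (a.castLT (lt_of_lt_of_le h (Nat.lt_succ_iff.mp b.isLt)))]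
  · rw [← det_transpose (M.submatrix _ _)]
    simp [ha, mul_assoc]
    rfl
  · intro j _ hj
    have : b.succAbove j ≠ a := fun e => hj (Fin.succAbove_right_injective (e.trans ha.symm))
    simp [this]
  · simp
  · intro j _ hj
    simp [hj]
  · simp

/-- Three-term Plücker relation for the maximal minors `M[{a,b}]` of an
`(n+2) × n` matrix (`M[{a,b}]` deletes rows `a` and `b`):
`M[{j₁,j₂}]M[{j₃,j₄}] - M[{j₁,j₃}]M[{j₂,j₄}] + M[{j₁,j₄}]M[{j₂,j₃}] = 0`. -/
theorem plucker_three_term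
    {R : Type*} [CommRing R] (n : ℕ)
    (M : Matrix (Fin (n + 2)) (Fin n) R)
    (j₁ j₂ j₃ j₄ : Fin (n + 2))
    (h12 : j₁ < j₂) (h23 : j₂ < j₃) (h34 : j₃ < j₄) :
    (M.submatrix (skipTwo j₁ j₂ h12) id).det *
        (M.submatrix (skipTwo j₃ j₄ h34) id).det
      - (M.submatrix (skipTwo j₁ j₃ (h12.trans h23)) id).det *
        (M.submatrix (skipTwo j₂ j₄ (h23.trans h34)) id).det
      + (M.submatrix (skipTwo j₁ j₄ ((h12.trans h23).trans h34)) id).det *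
        (M.submatrix (skipTwo j₂ j₃ h23) id).det = 0 := by
  have key := det_vecCons_mul_det_vecCons Mᵀ (Pi.single j₂ 1) (Pi.single j₁ 1)
    (Pi.single j₄ 1) (Pi.single j₃ 1)
  rw [det_vecCons_swap _ (Pi.single j₂ 1) (Pi.single j₃ 1),
    det_vecCons_swap _ (Pi.single j₂ 1) (Pi.single j₄ 1),
    det_vecCons_swap _ (Pi.single j₁ 1) (Pi.single j₃ 1),
    det_vecCons_single_single M j₁ j₂ h12, det_vecCons_single_single M j₃ j₄ h34,
    det_vecCons_single_single M j₁ j₃ (h12.trans h23),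
    det_vecCons_single_single M j₂ j₄ (h23.trans h34),
    det_vecCons_single_single M j₁ j₄ ((h12.trans h23).trans h34),
    det_vecCons_single_single M j₂ j₃ h23] at key
  have hu : IsUnit ((-1 : R) ^ (j₁ + j₂ + j₃ + j₄ : ℕ)) := (isUnit_one.neg).pow _
  rw [← hu.mul_right_eq_zero]
  simp only [pow_add]
  linear_combination key
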